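/- arXiv:2311.01884 — 3 statements merged into one kernel-verified Lean document; each statement's English description precedes it below -/
import Mathlib

section
/- Let G be a finite simple bipartite graph of even order n with two distinct vertices u, v such that N(u) = N(v). Then the HL-index of G is 0, i.e., λ_{n/2}(G) = λ_{n/2+1}(G) = 0. -/
open SimpleGraph Matrix

theorem adjMatrix_isHermitian {V : Type} [Fintype V] [DecidableEq V]
    (G : SimpleGraph V) [DecidableRel G.Adj] : (G.adjMatrix ℝ).IsHermitian := by
  ext i j
  simp [Matrix.conjTranspose_apply, SimpleGraph.adj_comm]

/-- Multiset of adjacency eigenvalues. -/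
noncomputable def adjSpectrum {V : Type} [Fintype V] [DecidableEq V]
    (G : SimpleGraph V) [DecidableRel G.Adj] : Multiset ℝ :=
  Finset.univ.val.map (adjMatrix_isHermitian G).eigenvalues

/-- the i-th largest adjacency eigenvalue (1-indexed). -/
noncomputable def eigval {V : Type} [Fintype V] [DecidableEq V]
    (G : SimpleGraph V) [DecidableRel G.Adj] (i : ℕ) : ℝ :=
  ((adjSpectrum G).sort (· ≤ ·)).getD (Fintype.card V - i) 0

lemma hl_countP_lower (L : List ℝ) (hL : L.Pairwise (· ≤ ·)) (k : ℕ) (hk : k < L.length)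
    (h : L[k] < 0) : k + 1 ≤ L.countP (fun x => decide (x < 0)) := by
  have h1 : (L.take (k+1)).countP (fun x => decide (x < 0)) = (L.take (k+1)).length := by
    rw [List.countP_eq_length]
    intro a ha
    obtain ⟨i, hi, rfl⟩ := List.getElem_of_mem ha
    rw [List.length_take] at hi
    rw [List.getElem_take]
    have : L[i] ≤ L[k] := by
      rcases Nat.lt_or_ge i k with h' | h'
      · exact List.pairwise_iff_getElem.1 hL i k _ _ h'
      · have : i = k := by omega
        subst this; exact le_rfl
    simpa using this.trans_lt h
  have h2 := (List.take_sublist (k+1) L).countP_le (p := fun x => decide (x < 0))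
  rw [h1, List.length_take] at h2
  omega

lemma hl_countP_upper (L : List ℝ) (hL : L.Pairwise (· ≤ ·)) (k : ℕ) (hk : k < L.length)
    (h : 0 < L[k]) : L.length - k ≤ L.countP (fun x => decide (0 < x)) := by
  have h1 : (L.drop k).countP (fun x => decide (0 < x)) = (L.drop k).length := by
    rw [List.countP_eq_length]
    intro a ha
    obtain ⟨i, hi, rfl⟩ := List.getElem_of_mem ha
    rw [List.length_drop] at hi
    rw [List.getElem_drop]
    have : L[k] ≤ L[k+i] := by
      rcases Nat.eq_zero_or_pos i with h' | h'
      · subst h'; exact le_rfl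
      · exact List.pairwise_iff_getElem.1 hL k (k+i) _ _ (by omega)
    simpa using h.trans_le this
  have h2 := (List.drop_sublist k L).countP_le (p := fun x => decide (0 < x))
  rw [h1, List.length_drop] at h2
  omega

lemma hl_roots_neg {V : Type} [Fintype V] [DecidableEq V] (A : Matrix V V ℝ)
    (hA : A.IsHermitian) :
    (-A).charpoly.roots = (Finset.univ.val.map hA.eigenvalues).map (fun x => -x) := by
  have h : (-A).charpoly =
      ∏ i, (Polynomial.X - Polynomial.C (-hA.eigenvalues i)) := by
    conv_lhs => rw [hA.spectral_theorem, Unitary.conjStarAlgAut_apply, ← neg_mul,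
      Matrix.charpoly_mul_comm, mul_neg, ← mul_assoc]
    simp only [SetLike.coe_mem,
      Unitary.star_mul_self_of_mem, one_mul]
    rw [Matrix.diagonal_neg, Matrix.charpoly_diagonal]
    rfl
  rw [h, Polynomial.roots_prod]
  · simp
  · simp only [Finset.prod_ne_zero_iff]
    intro i _
    exact Polynomial.X_sub_C_ne_zero _

lemma hl_spectrum_neg {V : Type} [Fintype V] [DecidableEq V]
    (G : SimpleGraph V) [DecidableRel G.Adj]
    (hbip : ∃ s : Set V, ∀ a b : V, G.Adj a b → (a ∈ s ↔ b ∉ s)) :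
    (adjSpectrum G).map (fun x => -x) = adjSpectrum G := by
  classical
  obtain ⟨s, hs⟩ := hbip
  have hA := adjMatrix_isHermitian G
  unfold adjSpectrum
  rw [← hl_roots_neg]
  have h2 := hA.roots_charpoly_eq_eigenvalues
  have h3 : Finset.univ.val.map hA.eigenvalues = (G.adjMatrix ℝ).charpoly.roots := by
    rw [h2]; rfl
  rw [h3]
  set D : Matrix V V ℝ := Matrix.diagonal (fun a => if a ∈ s then 1 else -1) with hD
  have hDD : D * D = 1 := by
    rw [hD, Matrix.diagonal_mul_diagonal, ← Matrix.diagonal_one]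
    congr 1; ext a; split_ifs <;> simp
  have hneg : -(G.adjMatrix ℝ) = D * (G.adjMatrix ℝ * D) := by
    ext a b
    rw [hD, Matrix.diagonal_mul, Matrix.mul_diagonal]
    simp only [Matrix.neg_apply, SimpleGraph.adjMatrix_apply]
    by_cases h : G.Adj a b
    · have := hs a b h
      by_cases ha : a ∈ s <;> by_cases hb : b ∈ s <;> simp_all
    · simp [h]
  rw [hneg, Matrix.charpoly_mul_comm, mul_assoc, hDD, mul_one]

lemma hl_zero_mem {V : Type} [Fintype V] [DecidableEq V]
    (G : SimpleGraph V) [DecidableRel G.Adj]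
    (u v : V) (huv : u ≠ v) (hN : G.neighborSet u = G.neighborSet v) :
    (0 : ℝ) ∈ adjSpectrum G := by
  have hdet : (G.adjMatrix ℝ).det = 0 := by
    apply Matrix.det_zero_of_row_eq huv
    ext w
    have : G.Adj u w ↔ G.Adj v w := by
      rw [← SimpleGraph.mem_neighborSet, hN, SimpleGraph.mem_neighborSet]
    simp [SimpleGraph.adjMatrix_apply, this]
  rw [(adjMatrix_isHermitian G).det_eq_prod_eigenvalues, Finset.prod_eq_zero_iff] at hdet
  obtain ⟨i, _, hi⟩ := hdet
  exact Multiset.mem_map.2 ⟨i, Finset.mem_univ_val i, hi⟩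

lemma hl_count (S : Multiset ℝ) :
    S.countP (fun x => x < 0) + S.countP (fun x => 0 < x) + S.count 0 = S.card := by
  induction S using Multiset.induction with
  | empty => simp
  | cons a S ih =>
    rw [Multiset.countP_cons, Multiset.countP_cons, Multiset.count_cons, Multiset.card_cons, ← ih]
    rcases lt_trichotomy a 0 with h | h | h
    · simp [h, h.not_gt, h.ne']; omega
    · simp [h]; omega
    · simp [h, h.not_gt, h.ne]; omega

theorem hl_index_zero_of_bipartite_with_twins
    {V : Type} [Fintype V] [DecidableEq V]
    (G : SimpleGraph V) [DecidableRel G.Adj]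
    (heven : Even (Fintype.card V))
    (hbip : ∃ s : Set V, ∀ a b : V, G.Adj a b → (a ∈ s ↔ b ∉ s))
    (u v : V) (huv : u ≠ v) (hN : G.neighborSet u = G.neighborSet v) :
    eigval G (Fintype.card V / 2) = 0 ∧ eigval G (Fintype.card V / 2 + 1) = 0 := by
  have hsym := hl_spectrum_neg G hbip
  have h0 := hl_zero_mem G u v huv hN
  have hcard : (adjSpectrum G).card = Fintype.card V := by
    simp [adjSpectrum]
  have hcnt := hl_count (adjSpectrum G)
  have hpn : (adjSpectrum G).countP (fun x => x < 0) =
      (adjSpectrum G).countP (fun x => 0 < x) := by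
    conv_lhs => rw [← hsym]
    rw [Multiset.countP_map, Multiset.countP_eq_card_filter]
    simp
  have hz := Multiset.count_pos.2 h0
  unfold eigval
  set S := adjSpectrum G with hS
  set L := S.sort (· ≤ ·) with hL
  have hLS : (L : Multiset ℝ) = S := Multiset.sort_eq _ _
  have hsorted : L.Pairwise (· ≤ ·) := Multiset.pairwise_sort _ _
  have hlen : L.length = Fintype.card V := by rw [← hcard, ← hLS, Multiset.coe_card]
  have hneg : L.countP (fun x => decide (x < 0)) = S.countP (fun x => x < 0) := by
    rw [← hLS, Multiset.coe_countP]
  have hpos : L.countP (fun x => decide (0 < x)) = S.countP (fun x => 0 < x) := by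
    rw [← hLS, Multiset.coe_countP]
  obtain ⟨m, hm⟩ := heven
  have key : ∀ k, (hk : k < L.length) → (k = m ∨ k + 1 = m) → L[k] = 0 := by
    intro k hk hkm
    rcases lt_trichotomy L[k] 0 with h | h | h
    · have := hl_countP_lower L hsorted k hk h
      omega
    · exact h
    · have := hl_countP_upper L hsorted k hk h
      omega
  constructor
  · rw [List.getD_eq_getElem _ _ (by omega)]
    exact key _ _ (by omega)
  · rw [List.getD_eq_getElem _ _ (by omega)]
    exact key _ _ (by omega)
end

section
/- Let G be a finite simple graph with maximum degree at most 3 that contains K_{2,3} as a subgraph. Then R(G) ≤ 1, i.e., |λ_h(G)| ≤ 1 and |λ_l(G)| ≤ 1 with h = ⌊(n+1)/2⌋, l = ⌈(n+1)/2⌉, where n = |V(G)|. -/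
open SimpleGraph Matrix

theorem list_upper (L : List ℝ) (hL : L.Pairwise (· ≤ ·)) (k : ℕ) (hk : k < L.length)
    (h : L.countP (fun a => decide (1 < a)) + k < L.length) : L.getD k 0 ≤ 1 := by
  by_contra hc
  push Not at hc
  rw [List.getD_eq_getElem _ _ hk] at hc
  have h1 : (L.drop k).countP (fun a => decide (1 < a)) = (L.drop k).length := by
    rw [List.countP_eq_length]
    intro a ha
    rw [List.mem_iff_getElem] at ha
    obtain ⟨i, hi, rfl⟩ := ha
    rw [List.length_drop] at hi
    rw [List.getElem_drop]
    have := hL.rel_get_of_le (a := ⟨k, hk⟩) (b := ⟨k + i, by omega⟩) (by simp)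
    simp only [List.get_eq_getElem] at this
    simpa using lt_of_lt_of_le hc this
  have h2 := (List.drop_sublist k L).countP_le (p := fun a => decide (1 < a))
  rw [h1, List.length_drop] at h2
  omega

theorem list_lower (L : List ℝ) (hL : L.Pairwise (· ≤ ·)) (k : ℕ) (hk : k < L.length)
    (h : L.countP (fun a => decide (a < -1)) < k + 1) : -1 ≤ L.getD k 0 := by
  by_contra hc
  push Not at hc
  rw [List.getD_eq_getElem _ _ hk] at hc
  have h1 : (L.take (k+1)).countP (fun a => decide (a < -1)) = (L.take (k+1)).length := by
    rw [List.countP_eq_length]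
    intro a ha
    rw [List.mem_iff_getElem] at ha
    obtain ⟨i, hi, rfl⟩ := ha
    rw [List.length_take] at hi
    rw [List.getElem_take]
    have := hL.rel_get_of_le (a := ⟨i, by omega⟩) (b := ⟨k, hk⟩) (by simp; omega)
    simp only [List.get_eq_getElem] at this
    simpa using lt_of_le_of_lt this hc
  have h2 := (List.take_sublist (k+1) L).countP_le (p := fun a => decide (a < -1))
  rw [h1, List.length_take] at h2
  omega

theorem exists_good_cut {V : Type} [Fintype V] [DecidableEq V]
    (G : SimpleGraph V) [DecidableRel G.Adj] (hdeg : ∀ v : V, G.degree v ≤ 3) :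
    ∃ σ : V → Bool, ∀ v, ((G.neighborFinset v).filter (fun u => σ u = σ v)).card ≤ 1 := by
  let s : (V → Bool) → V → ℝ := fun σ v => if σ v then 1 else -1
  let A := G.adjMatrix ℝ
  obtain ⟨σ, hσ⟩ := Finite.exists_min (fun σ : V → Bool => s σ ⬝ᵥ A *ᵥ s σ)
  refine ⟨σ, fun v => ?_⟩
  have hs : s (Function.update σ v (!σ v)) = s σ - (2 * s σ v) • (Pi.single v (1:ℝ) : V → ℝ) := by
    ext u
    by_cases hu : u = v
    · subst hu
      cases h : σ u <;> simp [s, h] <;> norm_num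
    · rw [Pi.sub_apply, Pi.smul_apply, Pi.single_eq_of_ne hu]
      simp [s, hu]
  have hsym : ∀ x y : V → ℝ, x ⬝ᵥ A *ᵥ y = y ⬝ᵥ A *ᵥ x := by
    intro x y
    rw [Matrix.dotProduct_mulVec, ← Matrix.mulVec_transpose, dotProduct_comm]
    simp [A]
  have h1 := hσ (Function.update σ v (!σ v))
  simp only [hs] at h1
  rw [Matrix.mulVec_sub, sub_dotProduct, dotProduct_sub, dotProduct_sub,
    Matrix.mulVec_smul, hsym (s σ), dotProduct_smul, hsym (s σ) (Pi.single v 1)] at h1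
  have h0 : (Pi.single v (1:ℝ)) ⬝ᵥ A *ᵥ (Pi.single v (1:ℝ)) = 0 := by
    simp [A]
  simp only [smul_dotProduct, dotProduct_smul, h0, smul_eq_mul, single_dotProduct, one_mul, mul_zero] at h1
  have h2 : s σ v * (A *ᵥ s σ) v ≤ 0 := by nlinarith
  have h3 : (A *ᵥ s σ) v = ∑ u ∈ G.neighborFinset v, s σ u := by
    simp [A, SimpleGraph.adjMatrix_mulVec_apply]
  have h4 : (((G.neighborFinset v).filter (fun u => σ u = σ v)).card : ℝ) =
      (G.degree v + s σ v * (A *ᵥ s σ) v) / 2 := by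
    rw [h3, ← SimpleGraph.card_neighborFinset_eq_degree, Finset.card_filter, Finset.mul_sum,
      Finset.card_eq_sum_ones]
    push_cast
    rw [← Finset.sum_add_distrib, Finset.sum_div]
    refine Finset.sum_congr rfl fun u _ => ?_
    cases h : σ u <;> cases h' : σ v <;> simp [s, h, h'] 
  have h5 : (G.degree v : ℝ) ≤ 3 := by exact_mod_cast hdeg v
  have h6 : (((G.neighborFinset v).filter (fun u => σ u = σ v)).card : ℝ) < 2 := by
    rw [h4]; linarith
  have : ((G.neighborFinset v).filter (fun u => σ u = σ v)).card < 2 := by exact_mod_cast h6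
  omega

theorem quad_bound {V : Type} [Fintype V] [DecidableEq V]
    (G : SimpleGraph V) [DecidableRel G.Adj] (σ : V → Bool) (b : Bool)
    (hσ : ∀ v, ((G.neighborFinset v).filter (fun u => σ u = σ v)).card ≤ 1)
    (ε : ℝ) (hε : |ε| = 1) (x : V → ℝ)
    (hx : G.adjMatrix ℝ *ᵥ x = G.adjMatrix ℝ *ᵥ (fun v => if σ v = b then x v else 0)) :
    ε * (x ⬝ᵥ G.adjMatrix ℝ *ᵥ x) ≤ x ⬝ᵥ x := by
  set u : V → ℝ := fun v => if σ v = b then x v else 0 with hu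
  set A := G.adjMatrix ℝ with hA
  have hsym : ∀ x y : V → ℝ, x ⬝ᵥ A *ᵥ y = y ⬝ᵥ A *ᵥ x := by
    intro x y
    rw [Matrix.dotProduct_mulVec, ← Matrix.mulVec_transpose, dotProduct_comm]
    simp [A]
  have hux : u ⬝ᵥ u ≤ x ⬝ᵥ x := by
    refine Finset.sum_le_sum fun v _ => ?_
    by_cases h : σ v = b <;> simp [hu, h]
    exact mul_self_nonneg _
  rw [hx, hsym x u, hx]
  refine le_trans ?_ hux
  -- the weight
  let w : V → V → ℝ := fun i j => if G.Adj i j ∧ σ i = σ j then 1 else 0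
  have hw : ∀ i, ∑ j, w i j ≤ 1 := by
    intro i
    have := hσ i
    have h2 : (∑ j, w i j) = (((G.neighborFinset i).filter (fun u => σ u = σ i)).card : ℝ) := by
      simp only [w, Finset.sum_boole]
      congr 2
      ext j
      simp [eq_comm]
    rw [h2]; exact_mod_cast this
  have hwsym : ∀ i j, w i j = w j i := by
    intro i j
    simp only [w, G.adj_comm i j, eq_comm (a := σ i)]
  have hw0 : ∀ i j, 0 ≤ w i j := by
    intro i j
    simp only [w]; split_ifs <;> norm_num
  have e1 : u ⬝ᵥ A *ᵥ u = ∑ i, ∑ j, w i j * (u i * u j) := by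
    simp only [dotProduct, Matrix.mulVec, Finset.mul_sum]
    refine Finset.sum_congr rfl fun i _ => Finset.sum_congr rfl fun j _ => ?_
    simp only [hA, SimpleGraph.adjMatrix_apply, w, hu]
    by_cases h : G.Adj i j <;> by_cases hi : σ i = b <;> by_cases hj : σ j = b <;>
      simp [h, hi, hj]
  have e2 : ε * (u ⬝ᵥ A *ᵥ u) ≤ ∑ i, ∑ j, (w i j * (u i * u i) / 2 + w i j * (u j * u j) / 2) := by
    rw [e1, Finset.mul_sum]
    refine Finset.sum_le_sum fun i _ => ?_
    rw [Finset.mul_sum]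
    refine Finset.sum_le_sum fun j _ => ?_
    have : ε * (u i * u j) ≤ (u i * u i) / 2 + (u j * u j) / 2 := by
      rcases (abs_eq (zero_le_one)).1 hε with h | h <;> rw [h] <;>
      nlinarith [sq_nonneg (u i - u j), sq_nonneg (u i + u j)]
    nlinarith [mul_le_mul_of_nonneg_left this (hw0 i j)]
  refine e2.trans ?_
  have e3 : ∑ i, ∑ j, w i j * (u j * u j) / 2 = ∑ i, ∑ j, w i j * (u i * u i) / 2 := by
    rw [Finset.sum_comm]
    refine Finset.sum_congr rfl fun i _ => Finset.sum_congr rfl fun j _ => ?_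
    rw [hwsym]
  simp only [Finset.sum_add_distrib]
  rw [e3, ← Finset.sum_add_distrib]
  refine Finset.sum_le_sum fun i _ => ?_
  rw [← Finset.sum_div, ← Finset.sum_mul]
  nlinarith [mul_le_mul_of_nonneg_right (hw i) (mul_self_nonneg (u i))]

theorem count_bound {V : Type} [Fintype V] [DecidableEq V] (A : Matrix V V ℝ)
    (hA : A.IsHermitian) (ε : ℝ) {T : Type} [Fintype T] (φ : (V → ℝ) →ₗ[ℝ] (T → ℝ))
    (h : ∀ x, φ x = 0 → ε * (x ⬝ᵥ A *ᵥ x) ≤ x ⬝ᵥ x) :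
    (Finset.univ.filter (fun i => 1 < ε * hA.eigenvalues i)).card ≤ Fintype.card T := by
  by_contra hc
  push Not at hc
  set S := Finset.univ.filter (fun i => 1 < ε * hA.eigenvalues i) with hS
  let b : V → V → ℝ := fun i => (hA.eigenvectorBasis i).ofLp
  have hb : ∀ i j, b i ⬝ᵥ b j = if i = j then 1 else 0 := by
    intro i j
    have := (orthonormal_iff_ite.1 hA.eigenvectorBasis.orthonormal) j i
    rw [EuclideanSpace.inner_eq_star_dotProduct] at this
    simpa [b, eq_comm] using this
  let ψ : (S → ℝ) →ₗ[ℝ] (V → ℝ) := ∑ i : S, (LinearMap.proj i).smulRight (b i)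
  have hψ : ∀ c, ψ c = ∑ i : S, c i • b i := by intro c; simp [ψ]
  have hker : LinearMap.ker (φ ∘ₗ ψ) ≠ ⊥ := by
    apply LinearMap.ker_ne_bot_of_finrank_lt
    simpa using hc
  obtain ⟨c, hc1, hc0⟩ := (Submodule.ne_bot_iff _).1 hker
  have h1 := h (ψ c) (by simpa using hc1)
  have hAψ : A *ᵥ ψ c = ∑ i : S, (c i * hA.eigenvalues i) • b i := by
    rw [hψ, Matrix.mulVec_sum]
    refine Finset.sum_congr rfl fun i _ => ?_
    rw [Matrix.mulVec_smul, mul_smul]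
    congr 1
    exact hA.mulVec_eigenvectorBasis i
  have hdot : ∀ d : S → ℝ, ψ c ⬝ᵥ (∑ i : S, d i • b i) = ∑ i : S, c i * d i := by
    intro d
    rw [hψ, sum_dotProduct]
    refine Finset.sum_congr rfl fun i _ => ?_
    rw [dotProduct_sum]
    simp [hb, mul_comm]
  rw [hAψ, hdot] at h1
  nth_rewrite 2 [hψ] at h1
  rw [hdot, Finset.mul_sum] at h1
  obtain ⟨i, hi⟩ := Function.ne_iff.1 hc0
  have hlt : ∑ i : S, c i * c i < ∑ i : S, ε * (c i * (c i * hA.eigenvalues i)) := by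
    have key : ∀ i : S, 1 < ε * hA.eigenvalues i := fun i => (Finset.mem_filter.1 i.2).2
    refine Finset.sum_lt_sum (fun i _ => ?_) ⟨i, Finset.mem_univ _, ?_⟩
    · nlinarith [key i, mul_self_nonneg (c i)]
    · have : 0 < c i * c i := mul_self_pos.2 hi
      nlinarith [key i]
  linarith

theorem main_count {V : Type} [Fintype V] [DecidableEq V]
    (G : SimpleGraph V) [DecidableRel G.Adj] (σ : V → Bool)
    (hσ : ∀ v, ((G.neighborFinset v).filter (fun u => σ u = σ v)).card ≤ 1)
    (x₁ x₂ : V) (hne : x₁ ≠ x₂) (hs : σ x₁ = σ x₂) (hN : ∀ v, G.Adj v x₁ ↔ G.Adj v x₂)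
    (ε : ℝ) (hε : |ε| = 1) :
    2 * (Finset.univ.filter (fun i => 1 < ε * (adjMatrix_isHermitian G).eigenvalues i)).card + 1
      ≤ Fintype.card V := by
  set A := Finset.univ.filter (fun v => σ v = σ x₁) with hA
  have hcard : A.card + Aᶜ.card = Fintype.card V := Finset.card_add_card_compl A
  by_cases hcmp : A.card ≤ Aᶜ.card
  · -- constraints on `A`
    have hx2 : x₂ ∈ A := by simp [hA, hs]
    have hb := count_bound _ (adjMatrix_isHermitian G) ε (T := {v // v ∈ A.erase x₂})
      (LinearMap.pi fun a => LinearMap.proj (R := ℝ) (φ := fun _ : V => ℝ) a.1 +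
        (if a.1 = x₁ then LinearMap.proj (R := ℝ) (φ := fun _ : V => ℝ) x₂ else 0)) ?_
    · rw [Fintype.card_coe, Finset.card_erase_of_mem hx2] at hb
      have : 0 < A.card := Finset.card_pos.2 ⟨_, hx2⟩
      omega
    · intro x hx
      refine quad_bound G σ (!σ x₁) hσ ε hε x ?_
      have h1 : x x₁ + x x₂ = 0 := by
        have := congrFun hx ⟨x₁, by simp [hA, hne]⟩
        simpa using this
      have h2 : ∀ a, σ a = σ x₁ → a ≠ x₁ → a ≠ x₂ → x a = 0 := by
        intro a ha ha1 ha2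
        have := congrFun hx ⟨a, by simp [hA, ha, ha2]⟩
        simpa [ha1] using this
      rw [← sub_eq_zero, ← Matrix.mulVec_sub]
      have h3 : (x - fun v => if σ v = !σ x₁ then x v else 0) =
          x x₁ • (Pi.single x₁ (1:ℝ) - Pi.single x₂ (1:ℝ)) := by
        ext v
        by_cases hv1 : v = x₁
        · subst hv1; simp [hne]
        by_cases hv2 : v = x₂
        · subst hv2; simp [hs, hv1]; linarith
        by_cases hv : σ v = σ x₁
        · simp [hv, hv1, hv2, h2 v hv hv1 hv2]
        · have : σ v = !σ x₁ := by revert hv; cases σ v <;> cases σ x₁ <;> simp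
          simp [this, hv1, hv2]
      rw [h3, Matrix.mulVec_smul, Matrix.mulVec_sub]
      ext v
      simp [hN]
  · have hb := count_bound _ (adjMatrix_isHermitian G) ε (T := {v // v ∈ Aᶜ})
      (LinearMap.pi fun a => LinearMap.proj (R := ℝ) (φ := fun _ : V => ℝ) a.1) ?_
    · rw [Fintype.card_coe] at hb
      omega
    · intro x hx
      refine quad_bound G σ (σ x₁) hσ ε hε x ?_
      congr 1
      ext v
      by_cases hv : σ v = σ x₁
      · simp [hv]
      · have := congrFun hx ⟨v, by simp [hA, hv]⟩
        simpa [hv] using this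

theorem hl_index_le_one_of_subcubic_with_K23_subgraph
    {V : Type} [Fintype V] [DecidableEq V]
    (G : SimpleGraph V) [DecidableRel G.Adj]
    (hdeg : ∀ v : V, G.degree v ≤ 3)
    (x₁ x₂ y₁ y₂ y₃ : V)
    (hnodup : ([x₁, x₂, y₁, y₂, y₃] : List V).Nodup)
    (h11 : G.Adj x₁ y₁) (h12 : G.Adj x₁ y₂) (h13 : G.Adj x₁ y₃)
    (h21 : G.Adj x₂ y₁) (h22 : G.Adj x₂ y₂) (h23 : G.Adj x₂ y₃) :
    |eigval G ((Fintype.card V + 1) / 2)| ≤ 1 ∧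
    |eigval G ((Fintype.card V + 2) / 2)| ≤ 1 := by
  obtain ⟨σ, hσ⟩ := exists_good_cut G hdeg
  simp only [List.nodup_cons, List.mem_cons, List.not_mem_nil, or_false, not_or] at hnodup
  obtain ⟨⟨hx12, -, -, -⟩, -, ⟨hy12, hy13⟩, hy23, -⟩ := hnodup
  have hc3 : ({y₁, y₂, y₃} : Finset V).card = 3 := Finset.card_eq_three.2 ⟨_, _, _, hy12, hy13, hy23, rfl⟩
  have hN : ∀ x, G.Adj x y₁ → G.Adj x y₂ → G.Adj x y₃ → G.neighborFinset x = {y₁, y₂, y₃} := by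
    intro x a b c
    symm
    apply Finset.eq_of_subset_of_card_le
    · intro v hv
      simp only [Finset.mem_insert, Finset.mem_singleton] at hv
      rw [SimpleGraph.mem_neighborFinset]
      rcases hv with rfl | rfl | rfl <;> assumption
    · rw [hc3]; exact hdeg x
  have hN1 := hN x₁ h11 h12 h13
  have hN2 := hN x₂ h21 h22 h23
  have hadj : ∀ v, G.Adj v x₁ ↔ G.Adj v x₂ := by
    intro v
    rw [G.adj_comm v, G.adj_comm v, ← SimpleGraph.mem_neighborFinset, hN1, ← hN2,
      SimpleGraph.mem_neighborFinset]
  have hs : σ x₁ = σ x₂ := by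
    have a1 := Finset.card_le_one.1 (hσ x₁)
    have a2 := Finset.card_le_one.1 (hσ x₂)
    rw [hN1] at a1
    rw [hN2] at a2
    simp only [Finset.mem_filter, Finset.mem_insert, Finset.mem_singleton] at a1 a2
    have b1 := a1 y₁
    have b2 := a1 y₂
    have c1 := a2 y₁
    have c2 := a2 y₂
    by_contra hne
    cases h1 : σ x₁ <;> cases h2 : σ x₂ <;> cases k1 : σ y₁ <;> cases k2 : σ y₂ <;>
      cases k3 : σ y₃ <;> grind
  have hup := main_count G σ hσ x₁ x₂ hx12 hs hadj 1 (by simp)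
  have hlo := main_count G σ hσ x₁ x₂ hx12 hs hadj (-1) (by simp)
  have hlen : ((adjSpectrum G).sort (· ≤ ·)).length = Fintype.card V := by
    simp [adjSpectrum, Finset.card_univ]
  have hsort : ((adjSpectrum G).sort (· ≤ ·)).Pairwise (· ≤ ·) := Multiset.pairwise_sort _ _
  have hcount : ∀ p : ℝ → Prop, ∀ [DecidablePred p],
      ((adjSpectrum G).sort (· ≤ ·)).countP (fun a => decide (p a)) =
      (Finset.univ.filter (fun i => p ((adjMatrix_isHermitian G).eigenvalues i))).card := by
    intro p _
    rw [← Multiset.coe_countP, Multiset.sort_eq, adjSpectrum, Multiset.countP_map]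
    rfl
  have c1 := hcount (fun a => 1 < a)
  have c2 := hcount (fun a => a < -1)
  simp only [one_mul] at hup
  have e : ∀ a : ℝ, 1 < -1 * a ↔ a < -1 := fun a => by constructor <;> intro h <;> linarith
  simp only [e] at hlo
  rw [← c1] at hup
  rw [← c2] at hlo
  constructor <;> rw [abs_le] <;> constructor
  · exact list_lower _ hsort _ (by omega) (by omega)
  · exact list_upper _ hsort _ (by omega) (by omega)
  · exact list_lower _ hsort _ (by omega) (by omega)
  · exact list_upper _ hsort _ (by omega) (by omega)
end

section
/- Every K_4-minor-free subcubic finite simple graph G satisfies R(G) ≤ 1, i.e., its median adjacency eigenvalues λ_h(G) and λ_l(G) (h = ⌊(n+1)/2⌋, l = ⌈(n+1)/2⌉) have absolute value at most 1. -/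
open SimpleGraph Matrix

/-- `G` has a `K₄` minor: four nonempty, pairwise disjoint, connected branch sets,
each pair joined by an edge of `G`. -/
def HasK4Minor {V : Type} (G : SimpleGraph V) : Prop :=
  ∃ B : Fin 4 → Set V,
    (∀ i, (B i).Nonempty) ∧
    (∀ i, (G.induce (B i)).Connected) ∧
    (Pairwise fun i j => Disjoint (B i) (B j)) ∧
    (∀ i j, i ≠ j → ∃ a ∈ B i, ∃ b ∈ B j, G.Adj a b)


set_option linter.all false

section Comb
variable {V : Type} [Fintype V] [DecidableEq V] (G : SimpleGraph V)

/-- `A` is closed under adjacency inside `K`. -/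
def Cl (K A : Finset V) : Prop := ∀ a ∈ A, ∀ b ∈ K, G.Adj a b → b ∈ A

/-- `s` is nonempty and connected, in terms of cuts. -/
def Cn (s : Finset V) : Prop := s.Nonempty ∧ ∀ A ⊆ s, A.Nonempty → Cl G s A → A = s

variable {G}

lemma exists_comp {K : Finset V} {y : V} (hy : y ∈ K) :
    ∃ Y ⊆ K, y ∈ Y ∧ Cn G Y ∧ Cl G K Y := by
  classical
  have hne : (K.powerset.filter (fun Y => y ∈ Y ∧ Cl G K Y)).Nonempty :=
    ⟨K, by simp [hy]; intro a _ b hb _; exact hb⟩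
  obtain ⟨Y, hY, hmin⟩ := Finset.exists_min_image _ Finset.card hne
  simp only [Finset.mem_filter, Finset.mem_powerset] at hY hmin
  obtain ⟨hYK, hyY, hcl⟩ := hY
  refine ⟨Y, hYK, hyY, ⟨⟨y, hyY⟩, ?_⟩, hcl⟩
  intro A hA hAne hAcl
  by_cases hyA : y ∈ A
  · have hle := hmin A ⟨hA.trans hYK, hyA, fun a ha b hb hab =>
      hAcl a ha b (hcl a (hA ha) b hb hab) hab⟩
    exact Finset.eq_of_subset_of_card_le hA hle
  · exfalso
    have hle := hmin (Y \ A) ⟨Finset.sdiff_subset.trans hYK, by simp [hyY, hyA], by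
      intro a ha b hb hab
      simp only [Finset.mem_sdiff] at ha ⊢
      refine ⟨hcl a ha.1 b hb hab, fun hbA => ha.2 (hAcl b hbA a ha.1 hab.symm)⟩⟩
    have := Finset.card_sdiff_add_card_eq_card hA
    have := hAne.card_pos
    omega

lemma Cn.sub {K T A : Finset V} (hT : Cn G T) (hTK : T ⊆ K) (hA : Cl G K A) {t : V}
    (ht : t ∈ T) (htA : t ∈ A) : T ⊆ A := by
  have := hT.2 (T ∩ A) Finset.inter_subset_left ⟨t, by simp [ht, htA]⟩ (by
    intro a ha b hb hab
    simp only [Finset.mem_inter] at ha ⊢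
    exact ⟨hb, hA a ha.2 b (hTK hb) hab⟩)
  rw [← this]; exact Finset.inter_subset_right

lemma Cn.union {s t : Finset V} (hs : Cn G s) (ht : Cn G t) {a b : V} (ha : a ∈ s) (hb : b ∈ t)
    (hab : G.Adj a b) : Cn G (s ∪ t) := by
  refine ⟨⟨a, by simp [ha]⟩, ?_⟩
  intro A hA ⟨c, hc⟩ hcl
  have h1 : ∀ x ∈ s, x ∈ A → s ⊆ A := fun x hx hxA =>
    hs.sub Finset.subset_union_left hcl hx hxA
  have h2 : ∀ x ∈ t, x ∈ A → t ⊆ A := fun x hx hxA =>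
    ht.sub Finset.subset_union_right hcl hx hxA
  have h3 : s ⊆ A ∧ t ⊆ A := by
    rcases Finset.mem_union.1 (hA hc) with h | h
    · have hsA := h1 c h hc
      exact ⟨hsA, h2 b hb (hcl a (hsA ha) b (by simp [hb]) hab)⟩
    · have htA := h2 c h hc
      exact ⟨h1 a ha (hcl b (htA hb) a (by simp [ha]) hab.symm), htA⟩
  exact Finset.Subset.antisymm hA (Finset.union_subset h3.1 h3.2)

lemma Cn.singleton (v : V) : Cn G {v} := by
  refine ⟨⟨v, by simp⟩, fun A hA hne _ => ?_⟩
  rcases Finset.subset_singleton_iff.1 hA with h | h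
  · simp [h] at hne
  · exact h

lemma Cn.connected {s : Finset V} (hs : Cn G s) : (G.induce (s : Set V)).Connected := by
  classical
  obtain ⟨⟨y, hy⟩, h⟩ := hs
  have hy' : y ∈ (s : Set V) := hy
  let A := s.filter (fun u => ∃ hu : u ∈ (s : Set V),
    (G.induce (s : Set V)).Reachable ⟨y, hy'⟩ ⟨u, hu⟩)
  have hA : A = s := by
    refine h A (Finset.filter_subset _ _) ⟨y, by simp [A, hy]⟩ ?_
    intro a ha b hb hab
    simp only [A, Finset.mem_filter] at ha ⊢
    obtain ⟨has, hu, hr⟩ := ha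
    refine ⟨hb, hb, hr.trans (SimpleGraph.Adj.reachable ?_)⟩
    simpa using hab
  have key : ∀ u : (s : Set V), (G.induce (s : Set V)).Reachable ⟨y, hy'⟩ u := by
    rintro ⟨u, hu⟩
    have : u ∈ A := by rw [hA]; exact hu
    simp only [A, Finset.mem_filter] at this
    exact this.2.2
  haveI : Nonempty (s : Set V) := ⟨⟨y, hy'⟩⟩
  exact ⟨fun a b => (key a).symm.trans (key b)⟩

/-- If `K` is connected, `p ∈ K`, and `Y` closed in `K - p`, then `K \ Y` is connected. -/
lemma Cn.sdiff {K Y : Finset V} (hK : Cn G K) {p : V} (hp : p ∈ K) (hY : Y ⊆ K.erase p)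
    (hcl : Cl G (K.erase p) Y) : Cn G (K \ Y) := by
  have hpY : p ∉ Y := fun h => by simpa using hY h
  have hYK : Y ⊆ K := hY.trans (Finset.erase_subset _ _)
  refine ⟨⟨p, by simp [hp, hpY]⟩, fun A hA hne hAcl => ?_⟩
  by_cases hpA : p ∈ A
  · have : A ∪ Y = K := by
      refine hK.2 _ (Finset.union_subset (hA.trans Finset.sdiff_subset) hYK)
        ⟨p, by simp [hpA]⟩ ?_
      intro a ha b hb hab
      by_cases hbY : b ∈ Y
      · simp [hbY]
      by_cases hbp : b = p
      · simp [hbp, hpA]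
      rcases Finset.mem_union.1 ha with h | h
      · exact Finset.mem_union_left _ (hAcl a h b (by simp [hb, hbY]) hab)
      · exact absurd (hcl a h b (by simp [hb, hbp]) hab) hbY
    ext u
    have := Finset.ext_iff.1 this u
    have h1 := @hA u
    simp only [Finset.mem_union, Finset.mem_sdiff] at *
    tauto
  · exfalso
    have : A = K := by
      refine hK.2 _ (hA.trans Finset.sdiff_subset) hne ?_
      intro a ha b hb hab
      have haK := Finset.mem_sdiff.1 (hA ha)
      refine hAcl a ha b ?_ hab
      refine Finset.mem_sdiff.2 ⟨hb, fun hbY => haK.2 ?_⟩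
      exact hcl b hbY a (Finset.mem_erase.2 ⟨fun h => hpA (h ▸ ha), haK.1⟩) hab.symm
    exact hpA (this ▸ hp)

/-- edges leaving a proper subset -/
lemma Cn.edge {K Y : Finset V} (hK : Cn G K) (hY : Y ⊆ K) (hne : Y.Nonempty) (hneq : Y ≠ K) :
    ∃ a ∈ Y, ∃ b ∈ K, b ∉ Y ∧ G.Adj a b := by
  by_contra h
  push Not at h
  exact hneq (hK.2 Y hY hne fun a ha b hb hab => by
    by_contra hbY; exact h a ha b hb hbY hab)

lemma rooted_aux {X K : Finset V} (hK : Cn G K) {y z p q a b : V}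
    (hy : y ∈ K) (hz : z ∈ K) (hp : p ∈ K) (ha : a ∈ X) (hb : b ∈ X)
    (hap : G.Adj a p) (hbq : G.Adj b q)
    {Y : Finset V} (hY : Y ⊆ K.erase p) (hcl : Cl G (K.erase p) Y) (hyY : y ∈ Y) (hzY : z ∉ Y)
    (hqY : q ∈ Y) (hYc : Cn G Y) :
    ∃ Y Z : Finset V, Y ⊆ K ∧ Z ⊆ K ∧ Cn G Y ∧ Cn G Z ∧ Disjoint Y Z ∧ y ∈ Y ∧ z ∈ Z ∧
      (∃ a ∈ X, ∃ b ∈ Y, G.Adj a b) ∧ (∃ a ∈ X, ∃ b ∈ Z, G.Adj a b) ∧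
      (∃ a ∈ Y, ∃ b ∈ Z, G.Adj a b) := by
  have hpY : p ∉ Y := fun h => by simpa using hY h
  have hYK : Y ⊆ K := hY.trans (Finset.erase_subset _ _)
  refine ⟨Y, K \ Y, hYK, Finset.sdiff_subset, hYc, hK.sdiff hp hY hcl,
    Finset.disjoint_sdiff, hyY, by simp [hz, hzY], ⟨b, hb, q, hqY, hbq⟩,
    ⟨a, ha, p, by simp [hp, hpY], hap⟩, ?_⟩
  obtain ⟨c, hc, d, hd, hdY, hcd⟩ := hK.edge hYK ⟨y, hyY⟩ (fun h => hpY (h ▸ hp))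
  exact ⟨c, hc, d, by simp [hd, hdY], hcd⟩

/-- Rooted triangle minor. -/
lemma rooted_triangle {U : Finset V} (hU : Cn G U) {x y z : V} (hx : x ∈ U) (hy : y ∈ U)
    (hxy : x ≠ y) (hxz : x ≠ z) (hyz : y ≠ z)
    (h : ∀ c ∈ U, ∃ T ⊆ U.erase c, Cn G T ∧ ((x ∈ T ∧ y ∈ T) ∨ (x ∈ T ∧ z ∈ T) ∨ (y ∈ T ∧ z ∈ T))) :
    ∃ X Y Z : Finset V, X ⊆ U ∧ Y ⊆ U ∧ Z ⊆ U ∧ Cn G X ∧ Cn G Y ∧ Cn G Z ∧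
      Disjoint X Y ∧ Disjoint X Z ∧ Disjoint Y Z ∧ x ∈ X ∧ y ∈ Y ∧ z ∈ Z ∧
      (∃ a ∈ X, ∃ b ∈ Y, G.Adj a b) ∧ (∃ a ∈ X, ∃ b ∈ Z, G.Adj a b) ∧
      (∃ a ∈ Y, ∃ b ∈ Z, G.Adj a b) := by
  classical
  have hne : (U.powerset.filter (fun X => Cn G X ∧ x ∈ X ∧
      ∃ T ⊆ U \ X, Cn G T ∧ y ∈ T ∧ z ∈ T)).Nonempty := by
    refine ⟨{x}, ?_⟩
    simp only [Finset.mem_filter, Finset.mem_powerset]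
    obtain ⟨T, hT, hTc, hh⟩ := h x hx
    have hxT : x ∉ T := fun h => by simpa using hT h
    refine ⟨by simpa using hx, Cn.singleton x, by simp, T, ?_, hTc, by tauto⟩
    rw [Finset.sdiff_singleton_eq_erase]; exact hT
  obtain ⟨X, hX, hmax⟩ := Finset.exists_max_image _ Finset.card hne
  simp only [Finset.mem_filter, Finset.mem_powerset] at hX hmax
  obtain ⟨hXU, hXc, hxX, T, hT, hTc, hyT, hzT⟩ := hX
  obtain ⟨K, hKU, hyK, hKc, hKcl⟩ := exists_comp (G := G) (hT hyT)
  have hzK : z ∈ K := hTc.sub hT hKcl hyT hyK hzT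
  have hKX : ∀ u ∈ K, u ∈ U ∧ u ∉ X := fun u hu => by simpa using hKU hu
  -- maximality
  have hM : ∀ p ∈ K, ∀ a ∈ X, G.Adj a p → ∀ T ⊆ K, p ∉ T → Cn G T → y ∈ T → z ∈ T → False := by
    intro p hp a ha hap T hT hpT hTc hyT hzT
    have := hmax (X ∪ {p}) ⟨Finset.union_subset hXU (by simpa using (hKX p hp).1),
      hXc.union (Cn.singleton p) ha (by simp) hap, by simp [hxX], T, ?_, hTc, hyT, hzT⟩
    · rw [Finset.card_union_of_disjoint (by simpa using (hKX p hp).2)] at this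
      simp at this
    · intro u hu
      have := hKX u (hT hu)
      simp only [Finset.mem_sdiff, Finset.mem_union, Finset.mem_singleton]
      refine ⟨this.1, fun h => h.elim this.2 (fun h => hpT (h ▸ hu))⟩
  have hUK : K ⊆ U := fun u hu => (hKX u hu).1
  -- a first attachment
  obtain ⟨p, hp, a, ha, haK', hpa⟩ := hU.edge hUK ⟨y, hyK⟩ (fun h => (hKX x (h ▸ hx)).2 hxX)
  have haX : a ∈ X := by
    by_contra hh
    exact haK' (hKcl p hp a (by simp [ha, hh]) hpa)
  -- a second attachment
  have h2 : ∃ q ∈ K, q ≠ p ∧ ∃ b ∈ X, G.Adj b q := by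
    by_contra hh
    push Not at hh
    obtain ⟨T, hT, hTc, hc⟩ := h p (hUK hp)
    have hpT : p ∉ T := fun h => by simpa using hT h
    have hcl : Cl G (U.erase p) (K.erase p) := by
      intro c hc d hd hcd
      simp only [Finset.mem_erase] at hc hd ⊢
      refine ⟨hd.1, hKcl c hc.2 d ?_ hcd⟩
      simp only [Finset.mem_sdiff]
      exact ⟨hd.2, fun hdX => hh c hc.2 hc.1 d hdX hcd.symm⟩
    have hsub : ∀ t ∈ T, t ∈ K → T ⊆ K := fun t ht htK =>
      (hTc.sub hT hcl ht (by simp only [Finset.mem_erase]; exact ⟨fun h => hpT (h ▸ ht), htK⟩)).trans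
        (Finset.erase_subset _ _)
    rcases hc with ⟨h1, h2⟩ | ⟨h1, h2⟩ | ⟨h1, h2⟩
    · exact (hKX x (hsub y h2 hyK h1)).2 hxX
    · exact (hKX x (hsub z h2 hzK h1)).2 hxX
    · exact hM p hp a haX hpa.symm T (hsub y h1 hyK) hpT hTc h1 h2
  obtain ⟨q, hq, hqp, b, hbX, hbq⟩ := h2
  suffices hs : ∃ Y Z : Finset V, Y ⊆ K ∧ Z ⊆ K ∧ Cn G Y ∧ Cn G Z ∧ Disjoint Y Z ∧ y ∈ Y ∧ z ∈ Z ∧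
      (∃ a ∈ X, ∃ b ∈ Y, G.Adj a b) ∧ (∃ a ∈ X, ∃ b ∈ Z, G.Adj a b) ∧
      (∃ a ∈ Y, ∃ b ∈ Z, G.Adj a b) by
    obtain ⟨Y, Z, hY, hZ, hYc, hZc, hd, hyY, hzZ, e1, e2, e3⟩ := hs
    refine ⟨X, Y, Z, hXU, hY.trans hUK, hZ.trans hUK, hXc, hYc, hZc, ?_, ?_, hd, hxX, hyY, hzZ,
      e1, e2, e3⟩
    · exact Finset.disjoint_left.2 fun u hu hu' => (hKX u (hY hu')).2 hu
    · exact Finset.disjoint_left.2 fun u hu hu' => (hKX u (hZ hu')).2 hu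
  -- main case
  have main : ∀ p q a b : V, p ∈ K → q ∈ K → q ≠ p → a ∈ X → b ∈ X → G.Adj a p → G.Adj b q →
      p ≠ y → p ≠ z → ∃ Y Z : Finset V, Y ⊆ K ∧ Z ⊆ K ∧ Cn G Y ∧ Cn G Z ∧ Disjoint Y Z ∧ y ∈ Y ∧ z ∈ Z ∧
      (∃ a ∈ X, ∃ b ∈ Y, G.Adj a b) ∧ (∃ a ∈ X, ∃ b ∈ Z, G.Adj a b) ∧
      (∃ a ∈ Y, ∃ b ∈ Z, G.Adj a b) := by
    intro p q a b hp hq hqp ha hb hap hbq hpy hpz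
    obtain ⟨Y, hYK, hyY, hYc, hYcl⟩ := exists_comp (G := G)
      (Finset.mem_erase.2 ⟨hpy.symm, hyK⟩)
    obtain ⟨Z, hZK, hzZ, hZc, hZcl⟩ := exists_comp (G := G)
      (Finset.mem_erase.2 ⟨hpz.symm, hzK⟩)
    have hYK' : Y ⊆ K := hYK.trans (Finset.erase_subset _ _)
    have hZK' : Z ⊆ K := hZK.trans (Finset.erase_subset _ _)
    have hpY : p ∉ Y := fun h => by simpa using hYK h
    have hpZ : p ∉ Z := fun h => by simpa using hZK h
    have hzY : z ∉ Y := fun hzY => hM p hp a ha hap Y hYK' hpY hYc hyY hzY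
    have hyZ : y ∉ Z := fun hyZ => hM p hp a ha hap Z hZK' hpZ hZc hyZ hzZ
    by_cases hqY : q ∈ Y
    · exact rooted_aux hKc hyK hzK hp ha hb hap hbq hYK hYcl hyY hzY hqY hYc
    by_cases hqZ : q ∈ Z
    · obtain ⟨Z, Y, hZ, hY, hZc, hYc, hd, hzZ, hyY, e1, e2, ⟨c, hc, d, hd', e3⟩⟩ :=
        rooted_aux hKc hzK hyK hp ha hb hap hbq hZK hZcl hzZ hyZ hqZ hZc
      exact ⟨Y, Z, hY, hZ, hYc, hZc, hd.symm, hyY, hzZ, e2, e1, ⟨d, hd', c, hc, e3.symm⟩⟩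
    · exfalso
      obtain ⟨c, hc, d, hd, hdY, hcd⟩ := hKc.edge hYK' ⟨y, hyY⟩ (fun h => hpY (h ▸ hp))
      have hdp : d = p := by
        by_contra hdp
        exact hdY (hYcl c hc d (by simp [hd, hdp]) hcd)
      subst hdp
      obtain ⟨c', hc', d', hd', hdZ, hcd'⟩ := hKc.edge hZK' ⟨z, hzZ⟩ (fun h => hpZ (h ▸ hp))
      have hdp' : d' = d := by
        by_contra hdp
        exact hdZ (hZcl c' hc' d' (by simp [hd', hdp]) hcd')
      subst hdp'
      have hc1 := (hYc.union (Cn.singleton d') hc (by simp) hcd)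
      have hc2 := hc1.union hZc (a := d') (by simp) hc' hcd'.symm
      refine hM q hq b hb hbq _ ?_ ?_ hc2 (by simp [hyY]) (by simp [hzZ])
      · refine Finset.union_subset (Finset.union_subset hYK' (by simpa using hp)) hZK'
      · simp [hqY, hqZ, hqp]
  by_cases hp1 : p ≠ y ∧ p ≠ z
  · exact main p q a b hp hq hqp haX hbX hpa.symm hbq hp1.1 hp1.2
  by_cases hq1 : q ≠ y ∧ q ≠ z
  · exact main q p b a hq hp hqp.symm hbX haX hbq hpa.symm hq1.1 hq1.2
  have hyN : ∃ a ∈ X, G.Adj a y := by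
    by_cases h1 : p = y
    · exact ⟨a, haX, h1 ▸ hpa.symm⟩
    · have : q = y := by
        by_contra h2; apply hqp; rw [show q = z by tauto, show p = z by tauto]
      exact ⟨b, hbX, this ▸ hbq⟩
  have hzN : ∃ a ∈ X, G.Adj a z := by
    by_cases h1 : p = z
    · exact ⟨a, haX, h1 ▸ hpa.symm⟩
    · have : q = z := by
        by_contra h2; apply hqp; rw [show q = y by tauto, show p = y by tauto]
      exact ⟨b, hbX, this ▸ hbq⟩
  obtain ⟨a, ha, hay⟩ := hyN
  obtain ⟨b, hb, hbz⟩ := hzN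
  obtain ⟨Y, hYK, hyY, hYc, hYcl⟩ := exists_comp (G := G)
      (Finset.mem_erase.2 ⟨hyz, hyK⟩)
  exact rooted_aux hKc hyK hzK hzK hb ha hbz hay hYK hYcl hyY
    (fun h => by simpa using hYK h) hyY hYc


/-- A good small separation of `U`. -/
def GSep (G : SimpleGraph V) (U : Finset V) : Prop :=
  ∃ S C : Finset V, S ⊆ U ∧ C ⊆ U \ S ∧ C.Nonempty ∧ C ≠ U \ S ∧ Cl G (U \ S) C ∧
    (S.card ≤ 1 ∨ (S.card ≤ 2 ∧ Even C.card))

lemma cn_of_not_gsep {U S : Finset V} (h : ¬ GSep G U) (hS : S ⊆ U) (hc : S.card ≤ 1)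
    (hne : (U \ S).Nonempty) : Cn G (U \ S) := by
  refine ⟨hne, fun A hA hAne hcl => ?_⟩
  by_contra hneq
  exact h ⟨S, A, hS, hA, hAne, hneq, hcl, Or.inl hc⟩

lemma not_root_gsep {U : Finset V} (h : ¬ GSep G U) (hev : Even U.card) (h6 : 6 ≤ U.card)
    {v x y z : V} (hv : v ∈ U) (hx : x ∈ U) (hy : y ∈ U) (hz : z ∈ U) (hvx : v ≠ x) (hvy : v ≠ y)
    (hvz : v ≠ z) (hxy : x ≠ y) (hxz : x ≠ z) (hyz : y ≠ z)
    (hN : ∀ u ∈ U, G.Adj v u → u = x ∨ u = y ∨ u = z) :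
    ∃ T ⊆ (U.erase v).erase x, Cn G T ∧ y ∈ T ∧ z ∈ T := by
  have hyW : y ∈ (U.erase v).erase x := by simp [hy, hvy.symm, hxy.symm]
  have hzW : z ∈ (U.erase v).erase x := by simp [hz, hvz.symm, hxz.symm]
  obtain ⟨T, hT, hyT, hTc, hTcl⟩ := exists_comp (G := G) hyW
  refine ⟨T, hT, hTc, hyT, ?_⟩
  by_contra hzT
  have hWc : ((U.erase v).erase x).card = U.card - 2 := by
    rw [Finset.card_erase_of_mem (by simp [hx, hvx.symm]), Finset.card_erase_of_mem hv]; omega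
  have hUS : U \ {v, x} = (U.erase v).erase x := by ext u; simp; tauto
  have hcard : (((U.erase v).erase x) \ T).card + T.card = U.card - 2 := by
    rw [Finset.card_sdiff_add_card_eq_card hT, hWc]
  have hTU : ∀ u ∈ T, u ∈ U ∧ u ≠ v ∧ u ≠ x := fun u hu => by
    have := hT hu; simp at this; tauto
  by_cases hTe : Even T.card
  · refine h ⟨{v, x}, T, by simp [Finset.insert_subset_iff, hv, hx], hUS ▸ hT, ⟨y, hyT⟩, ?_, hUS ▸ hTcl, Or.inr ⟨?_, hTe⟩⟩
    · rw [hUS]; exact fun h => hzT (h ▸ hzW)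
    · exact Finset.card_le_two
  have hTodd : T.card % 2 = 1 := by rw [Nat.even_iff] at hTe; omega
  have hUe : U.card % 2 = 0 := Nat.even_iff.1 hev
  by_cases hT1 : T.card = 1
  · -- use the other side
    set R := ((U.erase v).erase x) \ T with hR
    have hRU : ∀ u ∈ R, u ∈ U ∧ u ≠ v ∧ u ≠ x ∧ u ∉ T := fun u hu => by
      simp [hR] at hu; tauto
    have hzR : z ∈ R := by simp only [hR, Finset.mem_sdiff]; exact ⟨hzW, hzT⟩
    have hc : (R.erase z).card = R.card - 1 := Finset.card_erase_of_mem hzR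
    refine h ⟨{x, z}, R.erase z, by simp [Finset.insert_subset_iff, hz, hx], ?_,
      Finset.card_pos.1 (by omega), ?_, ?_, Or.inr ⟨Finset.card_le_two, ?_⟩⟩
    · intro u hu
      have h1 := hRU u (Finset.mem_of_mem_erase hu)
      have h2 := Finset.ne_of_mem_erase hu
      simp; tauto
    · intro heq
      have : v ∈ R.erase z := by rw [heq]; simp; tauto
      exact (hRU v (Finset.mem_of_mem_erase this)).2.1 rfl
    · intro a ha b hb hab
      have h1 := hRU a (Finset.mem_of_mem_erase ha)
      have h2 := Finset.ne_of_mem_erase ha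
      simp only [Finset.mem_sdiff, Finset.mem_insert, Finset.mem_singleton, not_or] at hb
      have hbv : b ≠ v := by
        rintro rfl
        rcases hN a h1.1 hab.symm with h | h | h
        · exact h1.2.2.1 h
        · exact h1.2.2.2 (h ▸ hyT)
        · exact h2 h
      have hbT : b ∉ T := fun hbT => h1.2.2.2 (hTcl b hbT a (by simp; tauto) hab.symm)
      simp [hR]; tauto
    · rw [Nat.even_iff]; omega
  · have hc : (T.erase y).card = T.card - 1 := Finset.card_erase_of_mem hyT
    refine h ⟨{x, y}, T.erase y, by simp [Finset.insert_subset_iff, hy, hx], ?_,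
      Finset.card_pos.1 (by omega), ?_, ?_, Or.inr ⟨Finset.card_le_two, ?_⟩⟩
    · intro u hu
      have h1 := hTU u (Finset.mem_of_mem_erase hu)
      have h2 := Finset.ne_of_mem_erase hu
      simp; tauto
    · intro heq
      have : v ∈ T.erase y := by rw [heq]; simp; tauto
      exact (hTU v (Finset.mem_of_mem_erase this)).2.1 rfl
    · intro a ha b hb hab
      have haT := Finset.mem_of_mem_erase ha
      have h1 := hTU a haT
      have h2 := Finset.ne_of_mem_erase ha
      simp only [Finset.mem_sdiff, Finset.mem_insert, Finset.mem_singleton, not_or] at hb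
      have hbv : b ≠ v := by
        rintro rfl
        rcases hN a h1.1 hab.symm with h | h | h
        · exact h1.2.2 h
        · exact h2 h
        · exact hzT (h ▸ haT)
      have hbT : b ∈ T := hTcl a haT b (by simp; tauto) hab
      simp; tauto
    · rw [Nat.even_iff]; omega

lemma not_sep_three {U : Finset V} (h : ¬ GSep G U) (hev : Even U.card)
    {v c x y z : V} (hv : v ∈ U) (hc : c ∈ U) (hvc : v ≠ c)
    (hx : x ∈ (U.erase v).erase c) (hy : y ∈ (U.erase v).erase c) (hz : z ∈ (U.erase v).erase c) :
    ∃ T ⊆ (U.erase v).erase c, Cn G T ∧ ((x ∈ T ∧ y ∈ T) ∨ (x ∈ T ∧ z ∈ T) ∨ (y ∈ T ∧ z ∈ T)) := by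
  by_contra hno
  push Not at hno
  obtain ⟨X, hX, hxX, hXc, hXcl⟩ := exists_comp (G := G) hx
  obtain ⟨Y, hY, hyY, hYc, hYcl⟩ := exists_comp (G := G) hy
  have h1 := hno X hX hXc
  have h2 := hno Y hY hYc
  have hzX := h1.2.1 hxX
  have hyX := h1.1 hxX
  have hzY := h2.2.2 hyY
  have hdis : Disjoint X Y := Finset.disjoint_left.2 fun u huX huY =>
    hyX (hYc.sub hY hXcl huY huX hyY)
  have hUS : U \ {v, c} = (U.erase v).erase c := by ext u; simp; tauto
  have key : ∀ C ⊆ (U.erase v).erase c, C.Nonempty → z ∉ C → Cl G ((U.erase v).erase c) C →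
      ¬ Even C.card := by
    intro C hC hne hzC hcl he
    refine h ⟨{v, c}, C, by simp [Finset.insert_subset_iff, hv, hc], hUS ▸ hC, hne, ?_, hUS ▸ hcl,
      Or.inr ⟨Finset.card_le_two, he⟩⟩
    rw [hUS]; exact fun h => hzC (h ▸ hz)
  have k1 := key X hX ⟨x, hxX⟩ hzX hXcl
  have k2 := key Y hY ⟨y, hyY⟩ hzY hYcl
  refine key (X ∪ Y) (Finset.union_subset hX hY) ⟨x, by simp [hxX]⟩ (by simp [hzX, hzY]) ?_ ?_
  · intro a ha b hb hab
    rcases Finset.mem_union.1 ha with h | h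
    · exact Finset.mem_union_left _ (hXcl a h b hb hab)
    · exact Finset.mem_union_right _ (hYcl a h b hb hab)
  · rw [Finset.card_union_of_disjoint hdis]
    rw [Nat.even_iff] at *
    omega

lemma k4_of_rooted {U : Finset V} {v x y z : V} (hvx : G.Adj v x) (hvy : G.Adj v y)
    (hvz : G.Adj v z) {X Y Z : Finset V} (hX : X ⊆ U.erase v) (hY : Y ⊆ U.erase v)
    (hZ : Z ⊆ U.erase v) (hXc : Cn G X) (hYc : Cn G Y) (hZc : Cn G Z)
    (hXY : Disjoint X Y) (hXZ : Disjoint X Z) (hYZ : Disjoint Y Z) (hxX : x ∈ X) (hyY : y ∈ Y)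
    (hzZ : z ∈ Z) (e1 : ∃ a ∈ X, ∃ b ∈ Y, G.Adj a b) (e2 : ∃ a ∈ X, ∃ b ∈ Z, G.Adj a b)
    (e3 : ∃ a ∈ Y, ∃ b ∈ Z, G.Adj a b) : HasK4Minor G := by
  have dv : ∀ W ⊆ U.erase v, Disjoint ({v} : Finset V) W := fun W hW =>
    Finset.disjoint_singleton_left.2 fun h => by simpa using hW h
  let B : Fin 4 → Finset V := ![{v}, X, Y, Z]
  have hB : ∀ i, Cn G (B i) := by
    intro i; fin_cases i
    · exact Cn.singleton v
    · exact hXc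
    · exact hYc
    · exact hZc
  have hlt : ∀ i j, i < j → Disjoint (B i) (B j) ∧ ∃ a ∈ B i, ∃ b ∈ B j, G.Adj a b := by
    have v1 : Disjoint (B 0) (B 1) ∧ ∃ a ∈ B 0, ∃ b ∈ B 1, G.Adj a b :=
      ⟨dv X hX, v, by simp [B], x, hxX, hvx⟩
    have v2 : Disjoint (B 0) (B 2) ∧ ∃ a ∈ B 0, ∃ b ∈ B 2, G.Adj a b :=
      ⟨dv Y hY, v, by simp [B], y, hyY, hvy⟩
    have v3 : Disjoint (B 0) (B 3) ∧ ∃ a ∈ B 0, ∃ b ∈ B 3, G.Adj a b :=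
      ⟨dv Z hZ, v, by simp [B], z, hzZ, hvz⟩
    have w1 : Disjoint (B 1) (B 2) ∧ ∃ a ∈ B 1, ∃ b ∈ B 2, G.Adj a b := ⟨hXY, e1⟩
    have w2 : Disjoint (B 1) (B 3) ∧ ∃ a ∈ B 1, ∃ b ∈ B 3, G.Adj a b := ⟨hXZ, e2⟩
    have w3 : Disjoint (B 2) (B 3) ∧ ∃ a ∈ B 2, ∃ b ∈ B 3, G.Adj a b := ⟨hYZ, e3⟩
    clear_value B
    intro i j hij
    fin_cases i <;> fin_cases j <;> first | (exact absurd hij (by decide)) | assumption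
  have hne : ∀ i j, i ≠ j → Disjoint (B i) (B j) ∧ ∃ a ∈ B i, ∃ b ∈ B j, G.Adj a b := by
    intro i j hij
    rcases lt_or_gt_of_ne hij with h | h
    · exact hlt i j h
    · obtain ⟨h1, a, ha, b, hb, hab⟩ := hlt j i h
      exact ⟨h1.symm, b, hb, a, ha, hab.symm⟩
  refine ⟨fun i => (B i : Set V), fun i => ?_, fun i => (hB i).connected, ?_, ?_⟩
  · exact_mod_cast (hB i).1
  · intro i j hij
    exact Finset.disjoint_coe.2 (hne i j hij).1
  · intro i j hij
    exact_mod_cast (hne i j hij).2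

lemma exists_gsep [DecidableRel G.Adj] (hdeg : ∀ v : V, G.degree v ≤ 3) (hK4 : ¬ HasK4Minor G)
    {U : Finset V} (hev : Even U.card) (h6 : 6 ≤ U.card) : GSep G U := by
  by_contra h
  have hUc : Cn G U := by
    have := cn_of_not_gsep h (S := ∅) (by simp) (by simp) (by simp; exact Finset.card_pos.1 (by omega))
    simpa using this
  by_cases hd : ∃ v ∈ U, (U ∩ G.neighborFinset v).card = 3
  · obtain ⟨v, hv, h3⟩ := hd
    obtain ⟨x, y, z, hxy, hxz, hyz, hxyz⟩ := Finset.card_eq_three.1 h3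
    have hmem : ∀ u, (u ∈ U ∧ G.Adj v u) ↔ (u = x ∨ u = y ∨ u = z) := fun u => by
      have := Finset.ext_iff.1 hxyz u
      simpa using this
    obtain ⟨hx, hvx⟩ := (hmem x).2 (by simp)
    obtain ⟨hy, hvy⟩ := (hmem y).2 (by simp)
    obtain ⟨hz, hvz⟩ := (hmem z).2 (by simp)
    have hN : ∀ u ∈ U, G.Adj v u → u = x ∨ u = y ∨ u = z := fun u hu ha => (hmem u).1 ⟨hu, ha⟩
    have hEc : Cn G (U.erase v) := by
      have := cn_of_not_gsep h (S := {v}) (by simpa using hv) (by simp)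
        ⟨x, by simp [hx, hvx.ne']⟩
      rwa [Finset.sdiff_singleton_eq_erase] at this
    obtain ⟨X, Y, Z, hX, hY, hZ, hXc, hYc, hZc, d1, d2, d3, m1, m2, m3, e1, e2, e3⟩ :=
      rooted_triangle hEc (x := x) (y := y) (z := z) (by simp [hx, hvx.ne']) (by simp [hy, hvy.ne'])
        hxy hxz hyz (by
        intro c hc
        simp only [Finset.mem_erase] at hc
        by_cases hcx : c = x
        · subst hcx
          obtain ⟨T, hT, hTc, h1, h2⟩ := not_root_gsep h hev h6 hv hx hy hz hvx.ne hvy.ne hvz.ne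
            hxy hxz hyz hN
          exact ⟨T, hT, hTc, by tauto⟩
        by_cases hcy : c = y
        · subst hcy
          obtain ⟨T, hT, hTc, h1, h2⟩ := not_root_gsep h hev h6 hv hy hx hz hvy.ne hvx.ne hvz.ne
            hxy.symm hyz hxz (fun u hu ha => by have := hN u hu ha; tauto)
          exact ⟨T, hT, hTc, by tauto⟩
        by_cases hcz : c = z
        · subst hcz
          obtain ⟨T, hT, hTc, h1, h2⟩ := not_root_gsep h hev h6 hv hz hx hy hvz.ne hvx.ne hvy.ne
            hxz.symm hyz.symm hxy (fun u hu ha => by have := hN u hu ha; tauto)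
          exact ⟨T, hT, hTc, by tauto⟩
        exact not_sep_three h hev hv hc.2 (Ne.symm hc.1)
          (by simp [hx, hvx.ne', Ne.symm hcx]) (by simp [hy, hvy.ne', Ne.symm hcy])
          (by simp [hz, hvz.ne', Ne.symm hcz]))
    exact hK4 (k4_of_rooted hvx hvy hvz hX hY hZ hXc hYc hZc d1 d2 d3 m1 m2 m3 e1 e2 e3)
  · push Not at hd
    have hd2 : ∀ v ∈ U, (U ∩ G.neighborFinset v).card ≤ 2 := by
      intro v hv
      have h1 := hd v hv
      have h2 : (U ∩ G.neighborFinset v).card ≤ (G.neighborFinset v).card :=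
        Finset.card_le_card Finset.inter_subset_right
      have h3 := hdeg v
      rw [← G.card_neighborFinset_eq_degree] at h3
      omega
    obtain ⟨x, hx⟩ := Finset.card_pos.1 (show 0 < U.card by omega)
    obtain ⟨x', hx', y, hy, hyx, hxy⟩ := hUc.edge (Y := {x}) (by simpa using hx) ⟨x, by simp⟩
      (fun h => by rw [← h] at h6; simp at h6)
    simp only [Finset.mem_singleton] at hx' hyx
    subst hx'
    set S := ((U ∩ G.neighborFinset x').erase y) ∪ ((U ∩ G.neighborFinset y).erase x') with hS
    have hSc : S.card ≤ 2 := by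
      refine (Finset.card_union_le _ _).trans ?_
      have h1 := hd2 x' hx
      have h2 := hd2 y hy
      rw [Finset.card_erase_of_mem (by simp [hy, hxy]), Finset.card_erase_of_mem (by simp [hx, hxy.symm])]
      omega
    have hSU : S ⊆ U := by
      intro u hu
      simp [hS] at hu
      tauto
    have hxS : x' ∉ S := by simp [hS]
    have hyS : y ∉ S := by simp [hS]
    have hp : ({x', y} : Finset V).card = 2 := Finset.card_pair (Ne.symm hyx)
    refine h ⟨S, {x', y}, hSU, ?_, ⟨x', by simp⟩, ?_, ?_, Or.inr ⟨hSc, by rw [hp]; decide⟩⟩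
    · simp [Finset.insert_subset_iff, hx, hy, hxS, hyS]
    · intro heq
      have h1 := Finset.card_sdiff_add_card_eq_card hSU
      rw [← heq, hp] at h1
      omega
    · intro a ha b hb hab
      simp only [Finset.mem_insert, Finset.mem_singleton] at ha ⊢
      by_contra hcon
      push Not at hcon
      rw [Finset.mem_sdiff] at hb
      apply hb.2
      rcases ha with rfl | rfl
      · simp [hS]; tauto
      · simp [hS]; tauto

end Comb

section Lin
variable {V : Type} [Fintype V] [DecidableEq V] (G : SimpleGraph V) [DecidableRel G.Adj]

/-- adjacency quadratic form -/
def qf (x : V → ℝ) : ℝ := ∑ u, ∑ v, if G.Adj u v then x u * x v else 0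

/-- There are at most `k` linear functionals such that `ε A ≤ I` on their common kernel within
the space of vectors supported on `U`. -/
def Good (ε : ℝ) (U : Finset V) (k : ℕ) : Prop :=
  ∃ L : List (Module.Dual ℝ (V → ℝ)), L.length ≤ k ∧ ∀ x : V → ℝ, (∀ u, u ∉ U → x u = 0) →
    (∀ l ∈ L, l x = 0) → ε * qf G x ≤ ∑ u, x u ^ 2

/-- restriction of a vector to a set -/
def restr (C : Finset V) : (V → ℝ) →ₗ[ℝ] (V → ℝ) where
  toFun x u := if u ∈ C then x u else 0
  map_add' x y := by ext u; by_cases h : u ∈ C <;> simp [h]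
  map_smul' c x := by ext u; by_cases h : u ∈ C <;> simp [h]

variable {G}

lemma restr_apply (C : Finset V) (x : V → ℝ) (u : V) :
    restr C x u = if u ∈ C then x u else 0 := rfl

lemma Good.combine {ε : ℝ} {U S C : Finset V} {k1 k2 : ℕ}
    (hcl : Cl G (U \ S) C) (h1 : Good G ε C k1) (h2 : Good G ε ((U \ S) \ C) k2) :
    Good G ε U (S.card + k1 + k2) := by
  obtain ⟨L1, hL1, h1⟩ := h1
  obtain ⟨L2, hL2, h2⟩ := h2
  set R := (U \ S) \ C with hR
  refine ⟨S.toList.map (fun s => LinearMap.proj s) ++ L1.map (fun l => l.comp (restr C)) ++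
    L2.map (fun l => l.comp (restr R)), ?_, ?_⟩
  · simp; omega
  intro x hx hL
  have hS : ∀ s ∈ S, x s = 0 := by
    intro s hs
    refine hL (LinearMap.proj s) ?_
    simp only [List.mem_append, List.mem_map, Finset.mem_toList]
    exact Or.inl (Or.inl ⟨s, hs, rfl⟩)
  have e1 := h1 (restr C x) (fun u hu => by simp [restr_apply, hu]) (fun l hl => by
    refine hL (l.comp (restr C)) ?_
    simp only [List.mem_append, List.mem_map]
    exact Or.inl (Or.inr ⟨l, hl, rfl⟩))
  have e2 := h2 (restr R x) (fun u hu => by simp [restr_apply, hu]) (fun l hl => by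
    refine hL (l.comp (restr R)) ?_
    simp only [List.mem_append, List.mem_map]
    exact Or.inr ⟨l, hl, rfl⟩)
  have hout : ∀ u, u ∉ C → u ∉ R → x u = 0 := by
    intro u hC hRu
    by_cases hU : u ∈ U
    · by_cases hs : u ∈ S
      · exact hS u hs
      · exact absurd (by simp [hR, hU, hs, hC]) hRu
    · exact hx u hU
  have hCR : ∀ u, u ∈ C → u ∉ R := fun u h h' => by simp [hR, h] at h'
  have s1 : ∑ u, x u ^ 2 = ∑ u, (restr C x u) ^ 2 + ∑ u, (restr R x u) ^ 2 := by
    rw [← Finset.sum_add_distrib]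
    refine Finset.sum_congr rfl fun u _ => ?_
    by_cases hC : u ∈ C
    · simp [restr_apply, hC, hCR u hC]
    · by_cases hRu : u ∈ R
      · simp [restr_apply, hC, hRu]
      · simp [restr_apply, hC, hRu, hout u hC hRu]
  have s2 : qf G x = qf G (restr C x) + qf G (restr R x) := by
    unfold qf
    rw [← Finset.sum_add_distrib]
    refine Finset.sum_congr rfl fun u _ => ?_
    rw [← Finset.sum_add_distrib]
    refine Finset.sum_congr rfl fun v _ => ?_
    by_cases ha : G.Adj u v
    · simp only [ha, if_true, restr_apply]
      have hno : ∀ a ∈ C, ∀ b ∈ R, ¬ G.Adj a b := by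
        intro a haC b hb hab
        rw [hR, Finset.mem_sdiff] at hb
        exact hb.2 (hcl a haC b hb.1 hab)
      by_cases huC : u ∈ C
      · by_cases hvC : v ∈ C
        · simp [huC, hvC, hCR u huC]
        · have : v ∉ R := fun h => hno u huC v h ha
          simp [huC, hvC, hCR u huC, hout v hvC this]
      · by_cases huR : u ∈ R
        · by_cases hvC : v ∈ C
          · exact absurd ha.symm (hno v hvC u huR)
          · by_cases hvR : v ∈ R
            · simp [huC, huR, hvC, hvR]
            · simp [huC, huR, hvC, hvR, hout v hvC hvR]
        · simp [huC, huR, hout u huC huR]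
    · simp [ha]
  rw [s1, s2]; linarith

lemma Good.empty (ε : ℝ) : Good G ε ∅ 0 := by
  refine ⟨[], by simp, fun x hx _ => ?_⟩
  have : x = 0 := by ext u; simpa using hx u (by simp)
  subst this
  simp [qf]

lemma qf_supp {U : Finset V} {x : V → ℝ} (hx : ∀ u, u ∉ U → x u = 0) :
    qf G x = ∑ u ∈ U, ∑ v ∈ U, if G.Adj u v then x u * x v else 0 := by
  unfold qf
  rw [← Finset.sum_subset (Finset.subset_univ U)]
  · refine Finset.sum_congr rfl fun u _ => ?_
    rw [← Finset.sum_subset (Finset.subset_univ U)]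
    intro v _ hv; simp [hx v hv]
  · intro u _ hu; simp [hx u hu]

lemma sq_supp {U : Finset V} {x : V → ℝ} (hx : ∀ u, u ∉ U → x u = 0) :
    ∑ u, x u ^ 2 = ∑ u ∈ U, x u ^ 2 := by
  rw [← Finset.sum_subset (Finset.subset_univ U)]
  intro u _ hu; simp [hx u hu]

lemma Good.one {ε : ℝ} {U : Finset V} (h : U.card = 1) : Good G ε U 0 := by
  obtain ⟨a, rfl⟩ := Finset.card_eq_one.1 h
  refine ⟨[], by simp, fun x hx _ => ?_⟩
  rw [qf_supp hx, sq_supp hx]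
  simp; positivity

lemma Good.two {ε : ℝ} (hε : ε = 1 ∨ ε = -1) {U : Finset V} (h : U.card = 2) : Good G ε U 0 := by
  obtain ⟨a, b, hab, rfl⟩ := Finset.card_eq_two.1 h
  refine ⟨[], by simp, fun x hx _ => ?_⟩
  rw [qf_supp hx, sq_supp hx]
  simp only [Finset.sum_pair hab, SimpleGraph.irrefl, if_false, G.adj_comm b a]
  by_cases ha : G.Adj a b <;> rcases hε with rfl | rfl <;> simp only [ha, if_true, if_false] <;>
    nlinarith [sq_nonneg (x a + x b), sq_nonneg (x a - x b)]

lemma Good.cycle {ε : ℝ} (hε : ε = 1 ∨ ε = -1) {a b c d : V} (hab : a ≠ b) (hac : a ≠ c)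
    (had : a ≠ d) (hbc : b ≠ c) (hbd : b ≠ d) (hcd : c ≠ d)
    (e1 : G.Adj a b) (e2 : G.Adj b c) (e3 : G.Adj c d) (e4 : G.Adj a d) :
    Good G ε {a, b, c, d} 1 := by
  refine ⟨[((LinearMap.proj a : Module.Dual ℝ (V → ℝ)) + (LinearMap.proj c : Module.Dual ℝ (V → ℝ))) +
    ε • ((LinearMap.proj b : Module.Dual ℝ (V → ℝ)) + (LinearMap.proj d : Module.Dual ℝ (V → ℝ)))], by simp, fun x hx hL => ?_⟩
  have hL := hL _ (List.mem_singleton.2 rfl)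
  simp only [LinearMap.add_apply, LinearMap.smul_apply, LinearMap.proj_apply, smul_eq_mul] at hL
  rw [qf_supp hx, sq_supp hx]
  have hs : ∀ f : V → ℝ, ∑ u ∈ ({a, b, c, d} : Finset V), f u = f a + (f b + (f c + f d)) := by
    intro f
    rw [Finset.sum_insert (by simp [hab, hac, had]), Finset.sum_insert (by simp [hbc, hbd]),
      Finset.sum_pair hcd]
  simp only [hs, SimpleGraph.irrefl, if_false, G.adj_comm b a, G.adj_comm c a, G.adj_comm d a,
    G.adj_comm c b, G.adj_comm d b, G.adj_comm d c, e1, e2, e3, e4, if_true]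
  generalize x a = p at *
  generalize x b = q at *
  generalize x c = r at *
  generalize x d = s at *
  rcases hε with rfl | rfl
  · have : p = -r - q - s := by linarith
    by_cases f1 : G.Adj a c <;> by_cases f2 : G.Adj b d <;> simp only [f1, f2, if_true, if_false] <;>
    nlinarith [sq_nonneg (p + r), sq_nonneg (q + s), sq_nonneg (p - r), sq_nonneg (q - s),
      sq_nonneg p, sq_nonneg q, sq_nonneg r, sq_nonneg s]
  · have : p = -r + q + s := by linarith
    by_cases f1 : G.Adj a c <;> by_cases f2 : G.Adj b d <;> simp only [f1, f2, if_true, if_false] <;>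
    nlinarith [sq_nonneg (p + r), sq_nonneg (q + s), sq_nonneg (p - r), sq_nonneg (q - s),
      sq_nonneg p, sq_nonneg q, sq_nonneg r, sq_nonneg s]

lemma four_prop {ab ac ad bc bd cd : Prop} (a1 : ¬ (¬ ab ∧ ¬ ac)) (a2 : ¬ (¬ ab ∧ ¬ ad))
    (a3 : ¬ (¬ ac ∧ ¬ ad)) (b1 : ¬ (¬ ab ∧ ¬ bc)) (b2 : ¬ (¬ ab ∧ ¬ bd)) (b3 : ¬ (¬ bc ∧ ¬ bd))
    (c1 : ¬ (¬ ac ∧ ¬ bc)) (c2 : ¬ (¬ ac ∧ ¬ cd)) (c3 : ¬ (¬ bc ∧ ¬ cd)) (d1 : ¬ (¬ ad ∧ ¬ bd))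
    (d2 : ¬ (¬ ad ∧ ¬ cd)) (d3 : ¬ (¬ bd ∧ ¬ cd)) :
    (ab ∧ bc ∧ cd ∧ ad) ∨ (ab ∧ bd ∧ cd ∧ ac) ∨ (ac ∧ bc ∧ bd ∧ ad) := by
  by_cases ab <;> by_cases ac <;> by_cases ad <;> by_cases bc <;> by_cases bd <;> by_cases cd <;>
    simp_all

lemma Good.four {ε : ℝ} (hε : ε = 1 ∨ ε = -1) {U : Finset V} (h : U.card = 4) (hs : ¬ GSep G U) :
    Good G ε U 1 := by
  have hdeg : ∀ v ∈ U, 2 ≤ (U ∩ G.neighborFinset v).card := by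
    intro v hv
    by_contra hlt
    push Not at hlt
    apply hs
    refine ⟨U ∩ G.neighborFinset v, {v}, Finset.inter_subset_left, by simp [hv], ⟨v, by simp⟩, ?_, ?_,
      Or.inl (by omega)⟩
    · intro heq
      have h1 := Finset.card_sdiff_add_card_eq_card
        (Finset.inter_subset_left : U ∩ G.neighborFinset v ⊆ U)
      rw [← heq] at h1
      simp at h1; omega
    · intro a ha b hb hab
      simp only [Finset.mem_singleton] at ha
      subst ha
      simp [hab] at hb
  obtain ⟨a, b, c, d, hab, hac, had, hbc, hbd, hcd, rfl⟩ := Finset.card_eq_four.1 h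
  have key : ∀ v s t w : V, ({a, b, c, d} : Finset V) = {v, s, t, w} → ¬ (¬ G.Adj v s ∧ ¬ G.Adj v t) := by
    rintro v s t w heq ⟨n1, n2⟩
    have h2 := hdeg v (by rw [heq]; simp)
    have : ({a, b, c, d} : Finset V) ∩ G.neighborFinset v ⊆ {w} := by
      rw [heq]
      intro u hu
      simp only [Finset.mem_inter, Finset.mem_insert, Finset.mem_singleton,
        SimpleGraph.mem_neighborFinset] at hu ⊢
      obtain ⟨h | h | h | h, hadj⟩ := hu
      · subst h; exact absurd hadj (G.irrefl)
      · subst h; exact absurd hadj n1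
      · subst h; exact absurd hadj n2
      · exact h
    have := Finset.card_le_card this
    simp at this
    omega
  have perm : ∀ v s t w : V, (∀ u, (u = a ∨ u = b ∨ u = c ∨ u = d) ↔ (u = v ∨ u = s ∨ u = t ∨ u = w)) →
      ({a, b, c, d} : Finset V) = {v, s, t, w} := by
    intro v s t w hh; ext u; simpa using hh u
  have a1 := key a b c d (perm _ _ _ _ (by intro u; clear * -; tauto))
  have a2 := key a b d c (perm _ _ _ _ (by intro u; clear * -; tauto))
  have a3 := key a c d b (perm _ _ _ _ (by intro u; clear * -; tauto))
  have b1 := key b a c d (perm _ _ _ _ (by intro u; clear * -; tauto))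
  have b2 := key b a d c (perm _ _ _ _ (by intro u; clear * -; tauto))
  have b3 := key b c d a (perm _ _ _ _ (by intro u; clear * -; tauto))
  have c1 := key c a b d (perm _ _ _ _ (by intro u; clear * -; tauto))
  have c2 := key c a d b (perm _ _ _ _ (by intro u; clear * -; tauto))
  have c3 := key c b d a (perm _ _ _ _ (by intro u; clear * -; tauto))
  have d1 := key d a b c (perm _ _ _ _ (by intro u; clear * -; tauto))
  have d2 := key d a c b (perm _ _ _ _ (by intro u; clear * -; tauto))
  have d3 := key d b c a (perm _ _ _ _ (by intro u; clear * -; tauto))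
  simp only [G.adj_comm b a, G.adj_comm c a, G.adj_comm d a,
    G.adj_comm c b, G.adj_comm d b, G.adj_comm d c] at *
  have cases : (G.Adj a b ∧ G.Adj b c ∧ G.Adj c d ∧ G.Adj a d) ∨
      (G.Adj a b ∧ G.Adj b d ∧ G.Adj c d ∧ G.Adj a c) ∨
      (G.Adj a c ∧ G.Adj b c ∧ G.Adj b d ∧ G.Adj a d) := by
    exact four_prop a1 a2 a3 b1 b2 b3 c1 c2 c3 d1 d2 d3
  rcases cases with ⟨e1, e2, e3, e4⟩ | ⟨e1, e2, e3, e4⟩ | ⟨e1, e2, e3, e4⟩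
  · exact Good.cycle hε hab hac had hbc hbd hcd e1 e2 e3 e4
  · rw [perm a b d c (by intro u; clear * -; tauto)]
    exact Good.cycle hε hab had hac hbd hbc hcd.symm e1 e2 e3.symm e4
  · rw [perm a c b d (by intro u; clear * -; tauto)]
    exact Good.cycle hε hac hab had hbc.symm hcd hbd e1 e2.symm e3 e4

lemma exists_good {ε : ℝ} (hε : ε = 1 ∨ ε = -1) (hdeg : ∀ v : V, G.degree v ≤ 3)
    (hK4 : ¬ HasK4Minor G) : ∀ n : ℕ, ∀ U : Finset V, U.card = n → 0 < n →
    ∃ k, 2 * k < n ∧ Good G ε U k := by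
  intro n
  induction n using Nat.strong_induction_on with
  | _ n ih =>
    intro U hU hn
    by_cases hodd : n % 2 = 1
    · by_cases h1 : n = 1
      · exact ⟨0, by omega, Good.one (by omega)⟩
      · obtain ⟨v, hv⟩ := Finset.card_pos.1 (show 0 < U.card by omega)
        have hc : (U \ {v}).card = n - 1 := by
          rw [Finset.sdiff_singleton_eq_erase, Finset.card_erase_of_mem hv, hU]
        obtain ⟨k, hk, hg⟩ := ih (n - 1) (by omega) (U \ {v}) hc (by omega)
        have := Good.combine (U := U) (S := {v}) (C := U \ {v}) (fun a _ b hb _ => hb) hg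
          (k2 := 0) (by rw [Finset.sdiff_self]; exact Good.empty ε)
        exact ⟨_, by simp; omega, this⟩
    by_cases hs : GSep G U
    · obtain ⟨S, C, hS, hC, hne, hneq, hcl, hcard⟩ := hs
      have c1 := Finset.card_sdiff_add_card_eq_card hS
      have c2 := Finset.card_sdiff_add_card_eq_card hC
      have c3 := hne.card_pos
      have c4 : 0 < ((U \ S) \ C).card := by
        by_contra h0
        exact hneq (Finset.eq_of_subset_of_card_le hC (by omega))
      obtain ⟨k1, hk1, g1⟩ := ih C.card (by omega) C rfl c3
      obtain ⟨k2, hk2, g2⟩ := ih _ (by omega) ((U \ S) \ C) rfl c4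
      refine ⟨_, ?_, Good.combine hcl g1 g2⟩
      rcases hcard with h | ⟨h, he⟩
      · omega
      · rw [Nat.even_iff] at he; omega
    · have hlt : n < 6 := by
        by_contra h6
        exact hs (exists_gsep hdeg hK4 (by rw [Nat.even_iff]; omega) (by omega))
      have : n = 2 ∨ n = 4 := by omega
      rcases this with rfl | rfl
      · exact ⟨0, by omega, Good.two hε hU⟩
      · exact ⟨1, by omega, Good.four hε hU hs⟩

lemma eig_count {ε : ℝ} {k : ℕ} (h : Good G ε Finset.univ k) :
    (Finset.univ.filter (fun i => 1 < ε * (adjMatrix_isHermitian G).eigenvalues i)).card ≤ k := by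
  obtain ⟨L, hL, h⟩ := h
  set hA := adjMatrix_isHermitian G
  set I := Finset.univ.filter (fun i => 1 < ε * hA.eigenvalues i) with hI
  by_contra hlt
  push Not at hlt
  let b : V → V → ℝ := fun i => (hA.eigenvectorBasis i).ofLp
  have horth : ∀ i j, b i ⬝ᵥ b j = if i = j then 1 else 0 := by
    intro i j
    have := (orthonormal_iff_ite.1 hA.eigenvectorBasis.orthonormal) j i
    rw [EuclideanSpace.inner_eq_star_dotProduct] at this
    simp only [star_trivial, eq_comm (a := j)] at this
    exact this
  have heig : ∀ i, (G.adjMatrix ℝ) *ᵥ b i = hA.eigenvalues i • b i := fun i =>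
    hA.mulVec_eigenvectorBasis i
  let F : (I → ℝ) →ₗ[ℝ] (V → ℝ) := Fintype.linearCombination ℝ (fun i : I => b i)
  have hF : ∀ c, F c = ∑ i : I, c i • b i := fun c => by
    simp [F, Fintype.linearCombination_apply]
  let Φ : (I → ℝ) →ₗ[ℝ] (Fin L.length → ℝ) := LinearMap.pi (fun j => (L.get j).comp F)
  have hker : LinearMap.ker Φ ≠ ⊥ := by
    apply LinearMap.ker_ne_bot_of_finrank_lt
    simp
    omega
  obtain ⟨c, hc, hc0⟩ := Submodule.exists_mem_ne_zero_of_ne_bot hker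
  have hx := h (F c) (by simp) (by
    intro l hl
    obtain ⟨j, rfl⟩ := List.get_of_mem hl
    exact congrFun (LinearMap.mem_ker.1 hc) j)
  have e1 : ∑ u, F c u ^ 2 = ∑ i : I, c i ^ 2 := by
    have : ∑ u, F c u ^ 2 = F c ⬝ᵥ F c := by simp [dotProduct, sq]
    rw [this, hF]
    simp only [sum_dotProduct, dotProduct_sum, smul_dotProduct, dotProduct_smul, horth]
    refine Finset.sum_congr rfl fun i _ => ?_
    simp [Subtype.val_inj, sq]
  have e2 : qf G (F c) = ∑ i : I, hA.eigenvalues i * c i ^ 2 := by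
    have : qf G (F c) = F c ⬝ᵥ ((G.adjMatrix ℝ) *ᵥ F c) := by
      simp only [qf, dotProduct, mulVec, Finset.mul_sum, SimpleGraph.adjMatrix_apply]
      refine Finset.sum_congr rfl fun u _ => Finset.sum_congr rfl fun v _ => ?_
      split_ifs <;> simp
    rw [this, hF]
    simp only [mulVec_sum, mulVec_smul, heig]
    simp only [sum_dotProduct, dotProduct_sum, smul_dotProduct, dotProduct_smul, horth]
    refine Finset.sum_congr rfl fun i _ => ?_
    simp [Subtype.val_inj, sq]
    ring
  rw [e1, e2, Finset.mul_sum] at hx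
  have hlt' : ∑ i : I, c i ^ 2 < ∑ i : I, ε * (hA.eigenvalues i * c i ^ 2) := by
    obtain ⟨i0, hi0⟩ := Function.ne_iff.1 hc0
    have hi : ∀ i : I, 1 < ε * hA.eigenvalues i := fun i => (Finset.mem_filter.1 i.2).2
    refine Finset.sum_lt_sum (fun i _ => ?_) ⟨i0, Finset.mem_univ _, ?_⟩
    · nlinarith [hi i, sq_nonneg (c i)]
    · have : 0 < c i0 ^ 2 := by
        have : c i0 ≠ 0 := hi0
        positivity
      nlinarith [hi i0]
  linarith

end Lin

lemma sorted_bound {l : List ℝ} (hl : l.Pairwise (· ≤ ·)) {j : ℕ} (hj : j < l.length) {k1 k2 : ℕ}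
    (h1 : l.countP (fun t => decide (1 < t)) ≤ k1) (h2 : l.countP (fun t => decide (t < -1)) ≤ k2)
    (hk1 : k1 < l.length - j) (hk2 : k2 < j + 1) : |l.getD j 0| ≤ 1 := by
  rw [List.getD_eq_getElem _ _ hj, abs_le]
  constructor
  · by_contra hlt
    push Not at hlt
    have : (l.take (j + 1)).countP (fun t => decide (t < -1)) = (l.take (j + 1)).length := by
      rw [List.countP_eq_length]
      intro a ha
      obtain ⟨i, hi, rfl⟩ := List.mem_iff_getElem.1 ha
      simp only [List.length_take] at hi
      simp only [List.getElem_take, decide_eq_true_eq]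
      refine lt_of_le_of_lt ?_ hlt
      rcases Nat.lt_or_ge i j with h | h
      · exact List.pairwise_iff_getElem.1 hl i j _ _ h
      · have : i = j := by omega
        subst this; exact le_rfl
    have h3 := (List.take_sublist (j + 1) l).countP_le (p := fun t => decide (t < -1))
    rw [this, List.length_take] at h3
    omega
  · by_contra hlt
    push Not at hlt
    have : (l.drop j).countP (fun t => decide (1 < t)) = (l.drop j).length := by
      rw [List.countP_eq_length]
      intro a ha
      obtain ⟨i, hi, rfl⟩ := List.mem_iff_getElem.1 ha
      simp only [List.length_drop] at hi
      simp only [List.getElem_drop, decide_eq_true_eq]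
      refine lt_of_lt_of_le hlt ?_
      rcases Nat.eq_zero_or_pos i with h | h
      · subst h; exact le_rfl
      · exact List.pairwise_iff_getElem.1 hl j (j + i) _ _ (by omega)
    have h3 := (List.drop_sublist j l).countP_le (p := fun t => decide (1 < t))
    rw [this, List.length_drop] at h3
    omega

theorem hl_index_le_one_of_K4_minor_free_subcubic
    {V : Type} [Fintype V] [DecidableEq V]
    (G : SimpleGraph V) [DecidableRel G.Adj]
    (hdeg : ∀ v : V, G.degree v ≤ 3)
    (hK4 : ¬ HasK4Minor G) :
    |eigval G ((Fintype.card V + 1) / 2)| ≤ 1 ∧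
    |eigval G ((Fintype.card V + 2) / 2)| ≤ 1 := by
  have hlen : ((adjSpectrum G).sort (· ≤ ·)).length = Fintype.card V := by
    rw [Multiset.length_sort]; simp [adjSpectrum]
  rcases Nat.eq_zero_or_pos (Fintype.card V) with h0 | hpos
  · have : (adjSpectrum G).sort (· ≤ ·) = [] := List.eq_nil_of_length_eq_zero (by omega)
    simp [eigval, this]
  obtain ⟨k1, hk1, g1⟩ := exists_good (ε := 1) (Or.inl rfl) hdeg hK4 _ Finset.univ rfl hpos
  obtain ⟨k2, hk2, g2⟩ := exists_good (ε := -1) (Or.inr rfl) hdeg hK4 _ Finset.univ rfl hpos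
  have hcount : ∀ (p : ℝ → Prop) [DecidablePred p],
      ((adjSpectrum G).sort (· ≤ ·)).countP (fun t => decide (p t)) =
      (Finset.univ.filter (fun i => p ((adjMatrix_isHermitian G).eigenvalues i))).card := by
    intro p _
    rw [← Multiset.coe_countP, Multiset.sort_eq, adjSpectrum, Multiset.countP_map]
    rfl
  have c1 := eig_count g1
  have c2 := eig_count g2
  have c1' : ((adjSpectrum G).sort (· ≤ ·)).countP (fun t => decide (1 < t)) ≤ k1 := by
    rw [hcount (fun t => 1 < t)]; simpa using c1
  have c2' : ((adjSpectrum G).sort (· ≤ ·)).countP (fun t => decide (t < -1)) ≤ k2 := by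
    rw [hcount (fun t => t < -1)]
    refine le_trans (Finset.card_le_card ?_) c2
    intro i hi
    simp only [Finset.mem_filter, Finset.mem_univ, true_and] at hi ⊢
    linarith
  have hsorted : ((adjSpectrum G).sort (· ≤ ·)).Pairwise (· ≤ ·) := Multiset.pairwise_sort _ _
  rw [Finset.card_univ] at hk1 hk2
  constructor
  · exact sorted_bound hsorted (by omega) c1' c2' (by omega) (by omega)
  · exact sorted_bound hsorted (by omega) c1' c2' (by omega) (by omega)
end
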